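/- Let k ≥ 0 and let K ⊆ ℝ³ be a nonempty bounded open set, with d_j = C(j+3,3). Then dim curl(P_k³) + dim { r ∈ P_k³ : ∫_K r·(curl v) dx = 0 for all v ∈ P_{k+1}³ } + dim { v ∈ P_{k+1}³ : ∫_K v·w dx = 0 for all w ∈ P_k³ + grad(𝒫̃_{k+2}) } = 3·d_k; that is, the linear system defining the curl+ projection of Section 3 of the paper is a square system on P_k³. -/

import Mathlib

open MvPolynomial MeasureTheory

/-- The `i`-th partial derivative as a linear map on polynomials in three variables. -/
noncomputable def pd (i : Fin 3) : MvPolynomial (Fin 3) ℝ →ₗ[ℝ] MvPolynomial (Fin 3) ℝ :=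
  (pderiv i).toLinearMap

/-- The gradient of a polynomial, `grad p = (∂₁p, ∂₂p, ∂₃p)`, as a linear map. -/
noncomputable def gradLM : MvPolynomial (Fin 3) ℝ →ₗ[ℝ] (Fin 3 → MvPolynomial (Fin 3) ℝ) :=
  LinearMap.pi fun i => pd i

/-- The curl of a polynomial vector field,
`curl F = (∂₂F₃ − ∂₃F₂, ∂₃F₁ − ∂₁F₃, ∂₁F₂ − ∂₂F₁)`, as a linear map. -/
noncomputable def curlLM : (Fin 3 → MvPolynomial (Fin 3) ℝ) →ₗ[ℝ] (Fin 3 → MvPolynomial (Fin 3) ℝ) :=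
  LinearMap.pi
    ![pd 1 ∘ₗ LinearMap.proj 2 - pd 2 ∘ₗ LinearMap.proj 1,
      pd 2 ∘ₗ LinearMap.proj 0 - pd 0 ∘ₗ LinearMap.proj 2,
      pd 0 ∘ₗ LinearMap.proj 1 - pd 1 ∘ₗ LinearMap.proj 0]

/-- `P_k³`: vector fields whose three components are polynomials of total degree ≤ k. -/
noncomputable def Pvec (k : ℕ) : Submodule ℝ (Fin 3 → MvPolynomial (Fin 3) ℝ) :=
  Submodule.pi Set.univ fun _ => restrictTotalDegree (Fin 3) ℝ k

/-- The `L²(K)` inner product `(F,G)_K = ∫_K F·G dx` of two polynomial vector fields. -/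
noncomputable def ipK (K : Set (Fin 3 → ℝ)) (F G : Fin 3 → MvPolynomial (Fin 3) ℝ) : ℝ :=
  ∫ x in K, ∑ i : Fin 3, eval x (F i) * eval x (G i)


abbrev VF := Fin 3 → MvPolynomial (Fin 3) ℝ

/-- Dimension of the orthogonal complement inside a finite-dimensional subspace. -/
lemma orth_dim {E : Type*} [AddCommGroup E] [Module ℝ E] (B : LinearMap.BilinForm ℝ E)
    (hB : ∀ F, B F F = 0 → F = 0) (A V : Submodule ℝ E)
    [FiniteDimensional ℝ V] (hAV : A ≤ V) :
    Module.finrank ℝ A + Module.finrank ℝ (V ⊓ B.orthogonal A : Submodule ℝ E)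
      = Module.finrank ℝ V := by
  have h := LinearMap.BilinForm.finrank_add_finrank_orthogonal' (B := B.restrict V)
    (A.comap V.subtype)
  have hk : (B.restrict V).ker = ⊥ := by
    rw [eq_bot_iff]
    intro x hx
    have h1 : (B.restrict V) x = 0 := hx
    have h2 : (B.restrict V) x x = 0 := by rw [h1]; rfl
    have h3 : B x x = 0 := h2
    have := hB _ h3
    simpa using this
  rw [hk, inf_bot_eq, finrank_bot, add_zero] at h
  have e1 := (Submodule.comapSubtypeEquivOfLe hAV).finrank_eq
  have e2 := (Submodule.comapSubtypeEquivOfLe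
    (inf_le_left : (V ⊓ B.orthogonal A : Submodule ℝ E) ≤ V)).finrank_eq
  have e3 : (B.restrict V).orthogonal (A.comap V.subtype)
      = (V ⊓ B.orthogonal A : Submodule ℝ E).comap V.subtype := by
    ext x
    simp only [LinearMap.BilinForm.mem_orthogonal_iff, Submodule.mem_comap, Submodule.mem_inf]
    constructor
    · intro hx
      refine ⟨x.2, fun a ha => hx ⟨a, hAV ha⟩ ha⟩
    · rintro ⟨-, hx⟩ n hn
      exact hx _ hn
  rw [e3] at h
  omega

lemma cont_ip (F G : VF) :
    Continuous fun x : Fin 3 → ℝ => ∑ i : Fin 3, eval x (F i) * eval x (G i) := by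
  refine continuous_finsetSum _ fun i _ => ?_
  exact (MvPolynomial.continuous_eval _).mul (MvPolynomial.continuous_eval _)

lemma int_ip (K : Set (Fin 3 → ℝ)) (hKb : Bornology.IsBounded K) (F G : VF) :
    IntegrableOn (fun x : Fin 3 → ℝ => ∑ i : Fin 3, eval x (F i) * eval x (G i)) K := by
  refine IntegrableOn.mono_set ?_ (subset_closure (s := K))
  exact (cont_ip F G).continuousOn.integrableOn_compact hKb.isCompact_closure

lemma ipK_symm (K : Set (Fin 3 → ℝ)) (F G : VF) : ipK K F G = ipK K G F := by
  unfold ipK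
  congr 1
  ext x
  exact Finset.sum_congr rfl fun i _ => mul_comm _ _

/-- The bilinear form. -/
noncomputable def bilK (K : Set (Fin 3 → ℝ)) (hKb : Bornology.IsBounded K) :
    LinearMap.BilinForm ℝ VF :=
  LinearMap.mk₂ ℝ (ipK K)
    (by
      intro a b c
      unfold ipK
      rw [← integral_add (int_ip K hKb _ _) (int_ip K hKb _ _)]
      congr 1
      ext x
      simp [add_mul, Finset.sum_add_distrib])
    (by
      intro r a b
      unfold ipK
      rw [smul_eq_mul, ← integral_const_mul]
      congr 1
      ext x
      simp [Finset.mul_sum, mul_assoc])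
    (by
      intro a b c
      unfold ipK
      rw [← integral_add (int_ip K hKb _ _) (int_ip K hKb _ _)]
      congr 1
      ext x
      simp [mul_add, Finset.sum_add_distrib])
    (by
      intro r a b
      unfold ipK
      rw [smul_eq_mul, ← integral_const_mul]
      congr 1
      ext x
      simp [Finset.mul_sum, mul_left_comm])

lemma ipK_pos (K : Set (Fin 3 → ℝ)) (hKo : IsOpen K) (hKne : K.Nonempty)
    (hKb : Bornology.IsBounded K) (F : VF) (h : ipK K F F = 0) : F = 0 := by
  unfold ipK at h
  have hn : ∀ x : Fin 3 → ℝ, 0 ≤ ∑ i : Fin 3, eval x (F i) * eval x (F i) := fun x =>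
    Finset.sum_nonneg fun i _ => mul_self_nonneg _
  rw [setIntegral_eq_zero_iff_of_nonneg_ae (Filter.Eventually.of_forall hn)
    (int_ip K hKb F F)] at h
  have h2 := Measure.eqOn_open_of_ae_eq h hKo (cont_ip F F).continuousOn continuousOn_const
  obtain ⟨x, hx⟩ := hKne
  obtain ⟨e, he, hb⟩ := Metric.isOpen_iff.mp hKo x hx
  funext i
  refine MvPolynomial.funext_set (fun j => Metric.ball (x j) e) (fun j => ?_) fun y hy => ?_
  · rw [Real.ball_eq_Ioo]
    exact Set.Ioo_infinite (by linarith)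
  · rw [← ball_pi x he] at hy
    have h3 := h2 (hb hy)
    simp only [Pi.zero_apply] at h3
    rw [Finset.sum_eq_zero_iff_of_nonneg fun i _ => mul_self_nonneg _] at h3
    simpa using h3 i (Finset.mem_univ i)

lemma mem_Pvec (k : ℕ) (v : VF) : v ∈ Pvec k ↔ ∀ i, (v i).totalDegree ≤ k := by
  simp [Pvec, Submodule.mem_pi, mem_restrictTotalDegree]

lemma finrank_rtd (k : ℕ) :
    Module.finrank ℝ (restrictTotalDegree (Fin 3) ℝ k) = Nat.choose (k + 3) 3 := by
  classical
  have hs : {n : Fin 3 →₀ ℕ | (n.sum fun _ e => e) ≤ k}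
      = ((Finset.range (k + 1)).biUnion fun j =>
          Finset.finsuppAntidiag (Finset.univ : Finset (Fin 3)) j : Finset (Fin 3 →₀ ℕ)) := by
    ext n
    simp [Finset.mem_finsuppAntidiag, Finsupp.sum_fintype]
  unfold restrictTotalDegree
  rw [Module.finrank_eq_nat_card_basis (basisRestrictSupport ℝ _), hs]
  simp only [SetLike.coe_sort_coe, Nat.card_eq_fintype_card, Fintype.card_coe]
  rw [Finset.card_biUnion]
  · simp only [Finset.card_finsuppAntidiag_nat_eq_choose, Finset.card_univ, Fintype.card_fin]
    induction k with
    | zero => simp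
    | succ k ih =>
      rw [Finset.sum_range_succ, ih ?_]
      · have : 3 + (k + 1) - 1 = (k + 1) + 2 := by omega
        rw [this, Nat.choose_symm_add, show k + 1 + 3 = (k + 3) + 1 by ring,
          Nat.choose_succ_succ (k + 3) 2]
        rw [show k + 1 + 2 = k + 3 by ring]
        simp [add_comm]
      · ext n
        simp [Finset.mem_finsuppAntidiag, Finsupp.sum_fintype]
  · intro i _ j _ hij
    rw [Function.onFun, Finset.disjoint_left]
    intro n h1 h2
    rw [Finset.mem_finsuppAntidiag] at h1 h2
    exact hij (h1.1.symm.trans h2.1)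

noncomputable def PvecEquiv (k : ℕ) :
    Pvec k ≃ₗ[ℝ] (Fin 3 → restrictTotalDegree (Fin 3) ℝ k) where
  toFun v i := ⟨v.1 i, v.2 i (Set.mem_univ i)⟩
  invFun w := ⟨fun i => (w i).1, fun i _ => (w i).2⟩
  map_add' _ _ := rfl
  map_smul' _ _ := rfl
  left_inv _ := rfl
  right_inv _ := rfl

instance (k : ℕ) : FiniteDimensional ℝ (Pvec k) :=
  Module.Finite.equiv (PvecEquiv k).symm

lemma finrank_Pvec (k : ℕ) : Module.finrank ℝ (Pvec k) = 3 * Nat.choose (k + 3) 3 := by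
  rw [(PvecEquiv k).finrank_eq, Module.finrank_pi_fintype]
  simp [finrank_rtd]

lemma pd_comm (i j : Fin 3) (p : MvPolynomial (Fin 3) ℝ) : pd i (pd j p) = pd j (pd i p) := by
  ext m
  simp only [pd, Derivation.coeFn_coe, coeff_pderiv]
  rw [add_right_comm]
  by_cases h : i = j
  · subst h; rfl
  · simp [h, Ne.symm h]
    ring

lemma pd_hc (i : Fin 3) (n : ℕ) (p : MvPolynomial (Fin 3) ℝ) :
    pd i (homogeneousComponent (n + 1) p) = homogeneousComponent n (pd i p) := by
  ext m
  simp only [pd, Derivation.coeFn_coe, coeff_pderiv, coeff_homogeneousComponent]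
  simp [Finsupp.degree_single]

lemma pd_deg (i : Fin 3) (n : ℕ) (p : MvPolynomial (Fin 3) ℝ) (hp : p.totalDegree ≤ n + 1) :
    (pd i p).totalDegree ≤ n := by
  refine Finset.sup_le fun m hm => ?_
  have h1 : coeff (m + Finsupp.single i 1) p ≠ 0 := by
    intro h0
    rw [mem_support_iff] at hm
    apply hm
    simp only [pd, Derivation.coeFn_coe, coeff_pderiv, h0, zero_mul]
  have h2 := le_totalDegree (mem_support_iff.mpr h1)
  rw [Finsupp.sum_add_index' (fun _ => rfl) (fun _ _ _ => rfl), Finsupp.sum_single_index rfl] at h2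
  omega

lemma curl_eq (v : VF) : curlLM v =
    ![pd 1 (v 2) - pd 2 (v 1), pd 2 (v 0) - pd 0 (v 2), pd 0 (v 1) - pd 1 (v 0)] := by
  funext i
  fin_cases i <;> rfl

lemma curl_grad (p : MvPolynomial (Fin 3) ℝ) : curlLM (gradLM p) = 0 := by
  rw [curl_eq]
  simp only [gradLM, LinearMap.pi_apply]
  rw [pd_comm 1 2, pd_comm 2 0, pd_comm 0 1]
  funext i
  fin_cases i <;> simp

lemma curl_zero_symm (v : VF) (h : curlLM v = 0) (i j : Fin 3) : pd i (v j) = pd j (v i) := by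
  rw [curl_eq] at h
  have h0 := sub_eq_zero.mp (congrFun h 0)
  have h1 := sub_eq_zero.mp (congrFun h 1)
  have h2 := sub_eq_zero.mp (congrFun h 2)
  fin_cases i <;> fin_cases j <;> first | rfl | assumption | (symm; assumption)

lemma hc_deg (k : ℕ) (p : MvPolynomial (Fin 3) ℝ) (hp : p.totalDegree ≤ k + 1) :
    (p - homogeneousComponent (k + 1) p).totalDegree ≤ k := by
  have h : p - homogeneousComponent (k + 1) p
      = ∑ i ∈ Finset.range (k + 1), homogeneousComponent i p := by
    have : ∑ i ∈ Finset.range (k + 2), homogeneousComponent i p = p := by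
      conv_rhs => rw [← sum_homogeneousComponent p]
      symm
      refine Finset.sum_subset (fun x hx => ?_) (fun x _ hx => ?_)
      · simp at hx ⊢; omega
      · simp at hx
        exact homogeneousComponent_eq_zero _ _ (by omega)
    rw [Finset.sum_range_succ] at this
    rw [sub_eq_iff_eq_add, this]
  rw [h]
  refine totalDegree_finsetSum_le fun i hi => ?_
  exact (homogeneousComponent_isHomogeneous i p).totalDegree_le.trans (by simp at hi; omega)

lemma grad_hom (k : ℕ) (h : VF) (hh : ∀ i, (h i).IsHomogeneous (k + 1))
    (hs : ∀ i j, pd i (h j) = pd j (h i)) :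
    h ∈ Submodule.map gradLM (homogeneousSubmodule (Fin 3) ℝ (k + 2)) := by
  refine ⟨((k : ℝ) + 2)⁻¹ • ∑ i, X i * h i, ?_, ?_⟩
  · refine Submodule.smul_mem _ _ (Submodule.sum_mem _ fun i _ => ?_)
    rw [mem_homogeneousSubmodule]
    have := (isHomogeneous_X ℝ i).mul (hh i)
    rwa [show 1 + (k + 1) = k + 2 by ring] at this
  · funext j
    have e := (hh j).sum_X_mul_pderiv
    have e2 : pd j (∑ i, X i * h i) = ((k : ℝ) + 2) • h j := by
      have : ∀ i, pd j (X i * h i) = X i * pderiv i (h j) + (if i = j then h i else 0) := by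
        intro i
        have h3 := hs j i
        simp only [pd, Derivation.coeFn_coe] at h3 ⊢
        rw [pderiv_mul, h3, pderiv_X]
        by_cases hij : i = j
        · subst hij; simp; ring
        · simp [hij]
      rw [map_sum, Finset.sum_congr rfl fun i _ => this i, Finset.sum_add_distrib, e]
      simp only [Finset.sum_ite_eq', Finset.mem_univ, if_true]
      rw [← Nat.cast_smul_eq_nsmul ℝ]
      push_cast
      module
    change pd j (((k : ℝ) + 2)⁻¹ • ∑ i, X i * h i) = h j
    rw [map_smul, e2, smul_smul, inv_mul_cancel₀ (by positivity), one_smul]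

lemma ker_le (k : ℕ) (v : VF) (hv : v ∈ Pvec (k + 1)) (hc : curlLM v = 0) :
    v ∈ Pvec k ⊔ Submodule.map gradLM (homogeneousSubmodule (Fin 3) ℝ (k + 2)) := by
  rw [mem_Pvec] at hv
  refine Submodule.mem_sup.mpr ⟨fun i => v i - homogeneousComponent (k + 1) (v i), ?_,
    fun i => homogeneousComponent (k + 1) (v i), ?_, ?_⟩
  · rw [mem_Pvec]
    exact fun i => hc_deg k _ (hv i)
  · refine grad_hom k _ (fun i => homogeneousComponent_isHomogeneous _ _) fun i j => ?_
    rw [pd_hc, pd_hc, curl_zero_symm v hc i j]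
  · funext i
    simp

lemma W_le (k : ℕ) : Pvec k ⊔ Submodule.map gradLM (homogeneousSubmodule (Fin 3) ℝ (k + 2))
    ≤ Pvec (k + 1) := by
  refine sup_le (fun v hv => ?_) ?_
  · rw [mem_Pvec] at hv ⊢
    exact fun i => (hv i).trans (Nat.le_succ k)
  · rintro _ ⟨p, hp, rfl⟩
    rw [mem_Pvec]
    intro i
    have hp' : p.IsHomogeneous (k + 2) := hp
    exact (hp'.pderiv (i := i)).totalDegree_le

lemma curl_le (k : ℕ) : Submodule.map curlLM (Pvec (k + 1)) ≤ Pvec k := by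
  rintro _ ⟨v, hv, rfl⟩
  have hv' := (mem_Pvec _ _).mp hv
  rw [mem_Pvec, curl_eq]
  have key : ∀ i j a b, (pd i (v a) - pd j (v b)).totalDegree ≤ k := fun i j a b =>
    (totalDegree_sub _ _).trans (max_le (pd_deg _ _ _ (hv' _)) (pd_deg _ _ _ (hv' _)))
  intro i
  fin_cases i
  · exact key 1 2 2 1
  · exact key 2 0 0 2
  · exact key 0 1 1 0

lemma rank_null {E F : Type*} [AddCommGroup E] [Module ℝ E] [AddCommGroup F] [Module ℝ F]
    (f : E →ₗ[ℝ] F) (V : Submodule ℝ E) [FiniteDimensional ℝ V] :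
    Module.finrank ℝ (V.map f) + Module.finrank ℝ (V ⊓ f.ker : Submodule ℝ E)
      = Module.finrank ℝ V := by
  have h := LinearMap.finrank_range_add_finrank_ker (f.domRestrict V)
  rw [LinearMap.range_domRestrict] at h
  have e2 := (Submodule.comapSubtypeEquivOfLe
    (inf_le_left : (V ⊓ f.ker : Submodule ℝ E) ≤ V)).finrank_eq
  have e3 : (f.domRestrict V).ker = (V ⊓ f.ker : Submodule ℝ E).comap V.subtype := by
    ext x
    simp
  rw [e3] at h
  omega

/-- The dimensions of `curl(P_k³)`, of the `L²(K)`-orthogonal complement of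
`curl(P_{k+1}³)` in `P_k³`, and of the `L²(K)`-orthogonal complement of
`P_k³ ⊕ grad(𝒫̃_{k+2})` in `P_{k+1}³` add up to `3·d_k = dim P_k³`:
the system defining the curl+ projection is square. -/
theorem stmt8 (k : ℕ) (K : Set (Fin 3 → ℝ)) (hKo : IsOpen K) (hKne : K.Nonempty)
    (hKb : Bornology.IsBounded K) :
    ∃ S₁ S₂ : Submodule ℝ (Fin 3 → MvPolynomial (Fin 3) ℝ),
      (S₁ : Set (Fin 3 → MvPolynomial (Fin 3) ℝ))
        = {r | r ∈ Pvec k ∧ ∀ v ∈ Pvec (k + 1), ipK K r (curlLM v) = 0} ∧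
      (S₂ : Set (Fin 3 → MvPolynomial (Fin 3) ℝ))
        = {v | v ∈ Pvec (k + 1) ∧
            ∀ w ∈ Pvec k ⊔ Submodule.map gradLM (homogeneousSubmodule (Fin 3) ℝ (k + 2)),
              ipK K v w = 0} ∧
      Module.finrank ℝ (Submodule.map curlLM (Pvec k))
        + Module.finrank ℝ S₁ + Module.finrank ℝ S₂
        = 3 * Nat.choose (k + 3) 3 := by

  set W := Pvec k ⊔ Submodule.map gradLM (homogeneousSubmodule (Fin 3) ℝ (k + 2)) with hW
  set B := bilK K hKb with hB
  have hBp : ∀ F, B F F = 0 → F = 0 := fun F h => ipK_pos K hKo hKne hKb F h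
  have hBa : ∀ F G, B F G = ipK K F G := fun F G => rfl
  refine ⟨Pvec k ⊓ B.orthogonal (Submodule.map curlLM (Pvec (k + 1))),
    Pvec (k + 1) ⊓ B.orthogonal W, ?_, ?_, ?_⟩
  · ext r
    simp only [SetLike.mem_coe, Submodule.mem_inf, LinearMap.BilinForm.mem_orthogonal_iff,
      Set.mem_ofPred_eq]
    refine and_congr_right fun _ => ⟨fun h v hv => ?_, ?_⟩
    · rw [ipK_symm]
      exact h _ (Submodule.mem_map_of_mem hv)
    · rintro h _ ⟨v, hv, rfl⟩
      have := h v hv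
      rw [ipK_symm] at this
      exact this
  · ext r
    simp only [SetLike.mem_coe, Submodule.mem_inf, LinearMap.BilinForm.mem_orthogonal_iff,
      Set.mem_ofPred_eq]
    refine and_congr_right fun _ => forall₂_congr fun v hv => ?_
    rw [ipK_symm]
    exact Iff.rfl
  · have h1 : Module.finrank ℝ (Submodule.map curlLM (Pvec (k + 1)))
        + Module.finrank ℝ ↥(Pvec k ⊓ B.orthogonal (Submodule.map curlLM (Pvec (k + 1))))
        = Module.finrank ℝ (Pvec k) := orth_dim B hBp _ _ (curl_le k)
    have h2 : Module.finrank ℝ W + Module.finrank ℝ ↥(Pvec (k + 1) ⊓ B.orthogonal W)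
        = Module.finrank ℝ (Pvec (k + 1)) := orth_dim B hBp _ _ (W_le k)
    have h3 : Module.finrank ℝ (Submodule.map curlLM (Pvec (k + 1)))
        + Module.finrank ℝ ↥(Pvec (k + 1) ⊓ LinearMap.ker curlLM)
        = Module.finrank ℝ (Pvec (k + 1)) := rank_null curlLM (Pvec (k + 1))
    have : FiniteDimensional ℝ W := Submodule.finiteDimensional_of_le (W_le k)
    have h4 : Module.finrank ℝ (Submodule.map curlLM W)
        + Module.finrank ℝ ↥(W ⊓ LinearMap.ker curlLM)
        = Module.finrank ℝ W := rank_null curlLM W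
    have e1 : W.map curlLM = (Pvec k).map curlLM := by
      rw [hW, Submodule.map_sup, sup_eq_left]
      rintro _ ⟨_, ⟨p, -, rfl⟩, rfl⟩
      rw [curl_grad]
      exact Submodule.zero_mem _
    have e2 : W ⊓ LinearMap.ker curlLM = Pvec (k + 1) ⊓ LinearMap.ker curlLM := by
      refine le_antisymm (inf_le_inf_right _ (W_le k)) ?_
      rintro v ⟨hv, hc⟩
      exact ⟨ker_le k v hv hc, hc⟩
    rw [e1, e2] at h4
    rw [finrank_Pvec] at h1
    omega
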